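/- Let X be a continuum and let (K_i)_{i∈ℕ} and (M_j)_{j∈ℕ} be sequences of continua such that no K_i embeds in X, no K_i embeds in any M_j, and no M_j embeds in any K_i. Let (a_i) and (b_j) be sequences of distinct points of X with {a_i : i ∈ ℕ} dense in X. Suppose Y is a continuum with an atomic continuous surjection p : Y → X such that each p⁻¹(a_i) is a boundary set in Y homeomorphic to K_i and p restricted to the preimage of X∖{a_i : i ∈ ℕ} is a homeomorphism onto that set, and suppose Z is a continuum with an atomic continuous surjection q : Z → X such that each q⁻¹(b_j) is a boundary set in Z homeomorphic to M_j and q restricted to the preimage of X∖{b_j : j ∈ ℕ} is a homeomorphism onto that set. Then no nonempty open subset of Y embeds in Z. -/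

import Mathlib

/-!
The argument compares a single fiber of `p` with the fibers of `q`.

Since the fibers `p ⁻¹' {a i}` are closed with empty interior, the Baire category theorem puts into
any nonempty open `U ⊆ Y` a point `y` with `p y ∉ range a`. The fiber through `y` is `{y}`, and `p` is
a closed map, so `U` contains the `p`-preimage of a neighbourhood of `p y`; by density of `range a`
it contains a whole fiber homeomorphic to some `K i` (`exists_fiber_subset`).

An embedding of `U` in `Z` therefore yields an embedding of `K i` in `Z`, with image a subcontinuum
`C`. If `C` misses every `q ⁻¹' {b j}`, then `q` is injective on `C` and `K i` embeds in `X`.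
Otherwise `C` meets some `q ⁻¹' {b j}`: either `C` lies inside it, so that `K i` embeds in `M j`, or
terminality of the fiber forces `q ⁻¹' {b j} ⊆ C`, so that `M j` embeds in `K i`
(`not_embedsIn_of_atomic`). All three possibilities are excluded.
-/

open Set Topology TopologicalSpace

universe u v

/-- A continuum: a nonempty compact connected metrizable topological space. -/
def IsContinuum (X : Type u) [TopologicalSpace X] : Prop :=
  Nonempty X ∧ CompactSpace X ∧ ConnectedSpace X ∧ MetrizableSpace X

/-- A subcontinuum of a space: a nonempty compact connected subset. -/
def IsSubcontinuum {X : Type u} [TopologicalSpace X] (S : Set X) : Prop :=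
  IsCompact S ∧ IsConnected S

/-- The subset `S` is indecomposable: it is not the union of two proper subcontinua. -/
def IsIndecomposableSet {X : Type u} [TopologicalSpace X] (S : Set X) : Prop :=
  ¬ ∃ A B : Set X, IsSubcontinuum A ∧ IsSubcontinuum B ∧
      A ⊆ S ∧ B ⊆ S ∧ A ≠ S ∧ B ≠ S ∧ A ∪ B = S

/-- An indecomposable space. -/
def IsIndecomposable (X : Type u) [TopologicalSpace X] : Prop :=
  IsIndecomposableSet (Set.univ : Set X)

/-- A hereditarily indecomposable space: every subcontinuum is indecomposable. -/
def HereditarilyIndecomposable (X : Type u) [TopologicalSpace X] : Prop :=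
  ∀ S : Set X, IsSubcontinuum S → IsIndecomposableSet S

/-- Covering dimension `≤ n`: every finite open cover admits a finite open refinement
in which every point lies in at most `n + 1` members. -/
def CovDimLE (X : Type u) [TopologicalSpace X] (n : ℕ) : Prop :=
  ∀ (ι : Type) (U : ι → Set X), Finite ι → (∀ i, IsOpen (U i)) → (⋃ i, U i) = Set.univ →
    ∃ (κ : Type) (V : κ → Set X), Finite κ ∧ (∀ j, IsOpen (V j)) ∧ (⋃ j, V j) = Set.univ ∧
      (∀ j, ∃ i, V j ⊆ U i) ∧ ∀ x : X, Nat.card {j : κ // x ∈ V j} ≤ n + 1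

/-- Covering dimension `≤ m` for an integer `m`; for `m < 0` this means the space is empty. -/
def CovDimLEInt (X : Type u) [TopologicalSpace X] (m : ℤ) : Prop :=
  (0 ≤ m ∧ CovDimLE X m.toNat) ∨ (m < 0 ∧ IsEmpty X)

/-- Covering dimension equal to `n`: `dim X ≤ n` but not `dim X ≤ n - 1`. -/
def CovDimEq (X : Type u) [TopologicalSpace X] (n : ℕ) : Prop :=
  CovDimLE X n ∧ ¬ CovDimLEInt X ((n : ℤ) - 1)

/-- An infinite-dimensional space: `dim X ≤ n` holds for no natural number `n`. -/
def InfiniteDimensional (X : Type u) [TopologicalSpace X] : Prop :=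
  ∀ n : ℕ, ¬ CovDimLE X n

/-- An `n`-dimensional Cantor manifold: a compact metrizable space with `dim X = n` such that
no closed subset `L` with `dim L ≤ n - 2` disconnects `X`, i.e. `X ∖ L` is connected. -/
def IsCantorManifold (X : Type u) [TopologicalSpace X] (n : ℕ) : Prop :=
  CompactSpace X ∧ MetrizableSpace X ∧ CovDimEq X n ∧
    ∀ L : Set X, IsClosed L → CovDimLEInt (↥L) ((n : ℤ) - 2) → IsConnected (Lᶜ : Set X)

/-- `L` is a partition between `A` and `B`: a closed set whose complement is the union of two
disjoint open sets containing `A` and `B` respectively. -/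
def IsPartitionBetween {X : Type u} [TopologicalSpace X] (L A B : Set X) : Prop :=
  IsClosed L ∧ ∃ U V : Set X, IsOpen U ∧ IsOpen V ∧ A ⊆ U ∧ B ⊆ V ∧ Disjoint U V ∧
    Lᶜ = U ∪ V

/-- A strongly infinite-dimensional space. -/
def StronglyInfiniteDimensional (X : Type u) [TopologicalSpace X] : Prop :=
  ∃ A B : ℕ → Set X,
    (∀ i, IsClosed (A i) ∧ IsClosed (B i) ∧ Disjoint (A i) (B i)) ∧
    ∀ L : ℕ → Set X, (∀ i, IsPartitionBetween (L i) (A i) (B i)) → (⋂ i, L i).Nonempty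

/-- A hereditarily strongly infinite-dimensional space: every subspace is either of covering
dimension `≤ 0` or strongly infinite-dimensional. -/
def HereditarilyStronglyInfiniteDimensional (X : Type u) [TopologicalSpace X] : Prop :=
  ∀ S : Set X, CovDimLE (↥S) 0 ∨ StronglyInfiniteDimensional (↥S)

/-- An infinite-dimensional Cantor manifold: an infinite-dimensional continuum such that every
closed subset disconnecting it is infinite-dimensional. -/
def IsInfiniteDimensionalCantorManifold (X : Type u) [TopologicalSpace X] : Prop :=
  IsContinuum X ∧ InfiniteDimensional X ∧
    ∀ L : Set X, IsClosed L → ¬ IsConnected (Lᶜ : Set X) → InfiniteDimensional (↥L)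

/-- A hereditarily strongly infinite-dimensional Cantor manifold. -/
def IsHSIDCantorManifold (X : Type u) [TopologicalSpace X] : Prop :=
  IsInfiniteDimensionalCantorManifold X ∧ HereditarilyStronglyInfiniteDimensional X

/-- A terminal subcontinuum: a subcontinuum `Y` such that every subcontinuum meeting both `Y`
and its complement contains `Y`. -/
def IsTerminalSubcontinuum {X : Type u} [TopologicalSpace X] (Y : Set X) : Prop :=
  IsSubcontinuum Y ∧
    ∀ Z : Set X, IsSubcontinuum Z → (Z ∩ Y).Nonempty → (Z \ Y).Nonempty → Y ⊆ Z

/-- An atomic map: a continuous map all of whose fibers are terminal subcontinua. -/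
def IsAtomicMap {M : Type u} {X : Type v} [TopologicalSpace M] [TopologicalSpace X]
    (p : M → X) : Prop :=
  Continuous p ∧ ∀ x : X, IsTerminalSubcontinuum (p ⁻¹' ({x} : Set X))

/-- A strongly chaotic space: for any two disjoint subsets `U`, `V` with `U` nonempty open,
there is no homeomorphism of `U` onto `V`. -/
def StronglyChaotic (X : Type u) [TopologicalSpace X] : Prop :=
  ∀ U V : Set X, Disjoint U V → U.Nonempty → IsOpen U → IsEmpty (↥U ≃ₜ ↥V)

/-- `Y` embeds in `Z`: there is a homeomorphism of `Y` onto a subspace of `Z`. -/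
def EmbedsIn (Y : Type u) (Z : Type v) [TopologicalSpace Y] [TopologicalSpace Z] : Prop :=
  ∃ f : Y → Z, Topology.IsEmbedding f

/-- `p : M → X` exhibits `M` as a pseudosuspension of `A` over `X` at `a`: `M` is a continuum,
`p` is an atomic surjection, `p ⁻¹ (a)` is homeomorphic to `A`, and `p` restricted to
`p ⁻¹ (X ∖ {a})` is a homeomorphism onto `X ∖ {a}`. -/
def IsPseudosuspension {X : Type u} {M : Type v} [TopologicalSpace X] [TopologicalSpace M]
    (A : Type w) [TopologicalSpace A] (a : X) (p : M → X) : Prop :=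
  IsContinuum M ∧ Function.Surjective p ∧ IsAtomicMap p ∧
    Nonempty (↥(p ⁻¹' ({a} : Set X)) ≃ₜ A) ∧
    IsHomeomorph (Set.restrictPreimage ({a}ᶜ : Set X) p)

/-- A weakly confluent map: every subcontinuum of the codomain is the image of some
subcontinuum of the domain. -/
def WeaklyConfluent {X : Type u} {Y : Type v} [TopologicalSpace X] [TopologicalSpace Y]
    (f : X → Y) : Prop :=
  ∀ B : Set Y, IsSubcontinuum B → ∃ A : Set X, IsSubcontinuum A ∧ f '' A = B

/-- `W` is a compactification of the ray with ray part `L`: `W` is compact metrizable and `L`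
is a dense open subset homeomorphic to the half-line `[0, ∞)`. -/
def IsRayCompactification (W : Type u) [TopologicalSpace W] (L : Set W) : Prop :=
  CompactSpace W ∧ MetrizableSpace W ∧ IsOpen L ∧ Dense L ∧
    Nonempty (↥L ≃ₜ ↥(Set.Ici (0 : ℝ)))

/-- A countable-dimensional space: the union of countably many finite-dimensional subspaces. -/
def CountableDimensional (X : Type u) [TopologicalSpace X] : Prop :=
  ∃ S : ℕ → Set X, (⋃ i, S i) = Set.univ ∧ ∀ i, ∃ n : ℕ, CovDimLE (↥(S i)) n

/-- Small transfinite inductive dimension `ind X ≤ α`. -/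
def IndLE (α : Ordinal.{u}) (X : Type u) [TopologicalSpace X] : Prop :=
  ∀ (x : X) (V : Set X), IsOpen V → x ∈ V →
    ∃ U : Set X, IsOpen U ∧ x ∈ U ∧ U ⊆ V ∧
      ∃ β : Ordinal.{u}, ∃ _ : β < α, IndLE β (↥(frontier U))
termination_by α

/-- Small transfinite inductive dimension `ind X = α`. -/
def IndEq (α : Ordinal.{u}) (X : Type u) [TopologicalSpace X] : Prop :=
  IndLE α X ∧ ∀ β : Ordinal.{u}, β < α → ¬ IndLE β X

/-- A bundled topological space. -/
structure TopSpace : Type 1 where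
  carrier : Type
  [topology : TopologicalSpace carrier]

attribute [instance] TopSpace.topology

instance : CoeSort TopSpace Type := ⟨TopSpace.carrier⟩

/-- The fibers of `f` over points of `S` have at most one point. -/
lemma eq_of_isHomeomorph_restrictPreimage {A : Type*} {B : Type*} [TopologicalSpace A]
    [TopologicalSpace B] {f : A → B} {S : Set B} (h : IsHomeomorph (S.restrictPreimage f))
    {x y : A} (hx : f x ∈ S) (hxy : f x = f y) : x = y := by
  have hy : f y ∈ S := hxy ▸ hx
  have : (⟨x, hx⟩ : f ⁻¹' S) = ⟨y, hy⟩ := h.injective (Subtype.ext hxy)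
  exact congrArg Subtype.val this

/-- Every nonempty open set of the domain of `p` contains one of the distinguished fibers. -/
lemma exists_fiber_subset {X Y : Type*} [TopologicalSpace X] [T2Space X] [TopologicalSpace Y]
    [CompactSpace Y] [T2Space Y] {a : ℕ → X} (ha : Dense (range a)) {p : Y → X}
    (hp : Continuous p) (hfib : ∀ i, interior (p ⁻¹' {a i}) = ∅)
    (hrest : IsHomeomorph ((range a)ᶜ.restrictPreimage p)) {U : Set Y} (hU : IsOpen U)
    (hne : U.Nonempty) : ∃ i, p ⁻¹' {a i} ⊆ U := by
  have hd : Dense (⋂ i, (p ⁻¹' {a i})ᶜ) :=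
    dense_iInter_of_isOpen (fun i => (isClosed_singleton.preimage hp).isOpen_compl)
      (fun i => interior_eq_empty_iff_dense_compl.1 (hfib i))
  obtain ⟨y, hyU, hy⟩ := hd.inter_open_nonempty U hU hne
  have hya : p y ∈ (range a)ᶜ := by
    rintro ⟨i, hi⟩
    exact mem_iInter.1 hy i hi.symm
  -- The set of points whose whole fiber lies in `U` is open, because `p` is closed.
  have hV : IsOpen (p '' Uᶜ)ᶜ := (hp.isClosedMap _ hU.isClosed_compl).isOpen_compl
  have hyV : p y ∈ (p '' Uᶜ)ᶜ := by
    rintro ⟨z, hz, hzy⟩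
    exact hz (eq_of_isHomeomorph_restrictPreimage hrest hya hzy.symm ▸ hyU)
  obtain ⟨_, hx, i, rfl⟩ := ha.inter_open_nonempty _ hV ⟨_, hyV⟩
  refine ⟨i, fun z hz => ?_⟩
  by_contra hzU
  exact hx ⟨z, hzU, hz⟩

/-- The only continua in the domain of `q` that neither embed in `X`, nor lie in some `M j`, are
those containing a copy of some `M j`. -/
lemma not_embedsIn_of_atomic {X Z K : Type*} [TopologicalSpace X] [T2Space X]
    [TopologicalSpace Z] [TopologicalSpace K] [CompactSpace K] [ConnectedSpace K]
    {M : ℕ → Type*} [∀ j, TopologicalSpace (M j)]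
    (hKX : ¬ EmbedsIn K X) (hKM : ∀ j, ¬ EmbedsIn K (M j)) (hMK : ∀ j, ¬ EmbedsIn (M j) K)
    {b : ℕ → X} {q : Z → X} (hq : IsAtomicMap q)
    (hfib : ∀ j, Nonempty (↥(q ⁻¹' {b j}) ≃ₜ M j))
    (hrest : IsHomeomorph ((range b)ᶜ.restrictPreimage q)) : ¬ EmbedsIn K Z := by
  rintro ⟨g, hg⟩
  by_cases h : ∃ j k, q (g k) = b j
  · obtain ⟨j, k, hk⟩ := h
    obtain ⟨e⟩ := hfib j
    by_cases hsub : ∀ k', g k' ∈ q ⁻¹' {b j}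
    · exact hKM j ⟨_, e.isEmbedding.comp (hg.codRestrict _ hsub)⟩
    · push Not at hsub
      obtain ⟨k', hk'⟩ := hsub
      have hC : IsSubcontinuum (range g) :=
        ⟨isCompact_range hg.continuous, isConnected_range hg.continuous⟩
      have hle : q ⁻¹' {b j} ⊆ range g :=
        (hq.2 (b j)).2 _ hC ⟨g k, mem_range_self k, hk⟩ ⟨g k', mem_range_self k', hk'⟩
      exact hMK j ⟨_, hg.toHomeomorph.symm.isEmbedding.comp
        ((IsEmbedding.inclusion hle).comp e.symm.isEmbedding)⟩
  · push Not at h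
    have hcont : Continuous (q ∘ g) := hq.1.comp hg.continuous
    refine hKX ⟨q ∘ g, (hcont.isClosedEmbedding fun x y hxy => hg.injective ?_).isEmbedding⟩
    refine eq_of_isHomeomorph_restrictPreimage hrest ?_ hxy
    rintro ⟨j, hj⟩
    exact h j x hj.symm

theorem stmt_5 {X Y Z : Type u} [TopologicalSpace X] [TopologicalSpace Y] [TopologicalSpace Z]
    (hX : IsContinuum X) (hY : IsContinuum Y) (hZ : IsContinuum Z)
    (K : ℕ → Type v) [∀ i, TopologicalSpace (K i)] (hK : ∀ i, IsContinuum (K i))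
    (M : ℕ → Type w) [∀ j, TopologicalSpace (M j)] (hM : ∀ j, IsContinuum (M j))
    (hKX : ∀ i, ¬ EmbedsIn (K i) X)
    (hKM : ∀ i j, ¬ EmbedsIn (K i) (M j))
    (hMK : ∀ j i, ¬ EmbedsIn (M j) (K i))
    (a : ℕ → X) (ha : Function.Injective a) (hadense : Dense (Set.range a))
    (b : ℕ → X) (hb : Function.Injective b)
    (p : Y → X) (hpsurj : Function.Surjective p) (hpatomic : IsAtomicMap p)
    (hpfib : ∀ i, interior (p ⁻¹' ({a i} : Set X)) = ∅ ∧
      Nonempty (↥(p ⁻¹' ({a i} : Set X)) ≃ₜ K i))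
    (hprest : IsHomeomorph (Set.restrictPreimage ((Set.range a)ᶜ : Set X) p))
    (q : Z → X) (hqsurj : Function.Surjective q) (hqatomic : IsAtomicMap q)
    (hqfib : ∀ j, interior (q ⁻¹' ({b j} : Set X)) = ∅ ∧
      Nonempty (↥(q ⁻¹' ({b j} : Set X)) ≃ₜ M j))
    (hqrest : IsHomeomorph (Set.restrictPreimage ((Set.range b)ᶜ : Set X) q)) :
    ∀ U : Set Y, IsOpen U → U.Nonempty → ¬ EmbedsIn (↥U) Z := by
  rintro U hU hne ⟨f, hf⟩
  obtain ⟨_, _, _, _⟩ := hX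
  obtain ⟨_, _, _, _⟩ := hY
  obtain ⟨i, hi⟩ :=
    exists_fiber_subset hadense hpatomic.1 (fun i => (hpfib i).1) hprest hU hne
  obtain ⟨e⟩ := (hpfib i).2
  obtain ⟨_, _, _, _⟩ := hK i
  exact not_embedsIn_of_atomic (hKX i) (hKM i) (fun j => hMK j i) hqatomic
    (fun j => (hqfib j).2) hqrest
    ⟨_, hf.comp ((IsEmbedding.inclusion hi).comp e.symm.isEmbedding)⟩
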